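/- Let S be a finite set of n points in the plane in convex position. Then every edge-labeled tree in ℒ(S) can be transformed into any other edge-labeled tree in ℒ(S) by a sequence of at most 3 simultaneous exchanges (with labels transferred along each exchange). -/

import Mathlib

open scoped Classical

noncomputable section

/-- Points in the plane. -/
abbrev Pt : Type := ℝ × ℝ

/-- The closed straight-line segment spanned by an (unordered) edge. -/
def segOf (e : Sym2 Pt) : Set Pt :=
  Sym2.lift ⟨fun p q => segment ℝ p q, fun p q => segment_symm ℝ p q⟩ e

/-- The set of endpoints of an edge. -/
def epts (e : Sym2 Pt) : Set Pt := {p | p ∈ e}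

/-- Two edges intersect in at most common endpoints (they do not cross). -/
def NoCrossPair (e f : Sym2 Pt) : Prop := segOf e ∩ segOf f ⊆ epts e ∩ epts f

/-- A set of edges is noncrossing: any two distinct edges meet in at most a common endpoint. -/
def NoCross (E : Finset (Sym2 Pt)) : Prop := ∀ e ∈ E, ∀ f ∈ E, e ≠ f → NoCrossPair e f

/-- `E` is the edge set of a noncrossing straight-line spanning tree on the point set `S`:
all edges are nondegenerate with endpoints in `S`, pairwise noncrossing, there are
`|S| - 1` of them, and they connect all of `S`. -/
def IsPST (S : Finset Pt) (E : Finset (Sym2 Pt)) : Prop :=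
  (∀ e ∈ E, ¬ e.IsDiag ∧ ∀ p ∈ e, p ∈ S) ∧
  NoCross E ∧ E.card + 1 = S.card ∧
  ∀ p ∈ S, ∀ q ∈ S, Relation.ReflTransGen (fun a b => s(a, b) ∈ E) p q

/-- `S` is in general position: no three of its points are collinear. -/
def GenPos (S : Finset Pt) : Prop :=
  ∀ p ∈ S, ∀ q ∈ S, ∀ r ∈ S, p ≠ q → p ≠ r → q ≠ r → ¬ Collinear ℝ ({p, q, r} : Set Pt)

/-- `S` is in convex position: every point of `S` is a vertex of the convex hull of `S`. -/
def ConvexPos (S : Finset Pt) : Prop :=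
  ∀ p ∈ S, p ∉ convexHull ℝ ((S : Set Pt) \ {p})

/-- The open interior of the triangle with vertices `p`, `q`, `r`. -/
def triInt (p q r : Pt) : Set Pt := interior (convexHull ℝ ({p, q, r} : Set Pt))

/-- `y` can be reached from `x` by a sequence of at most `m` `step`-operations. -/
def ReachesIn {α : Type*} (step : α → α → Prop) (m : ℕ) (x y : α) : Prop :=
  ∃ k ≤ m, ∃ f : ℕ → α, f 0 = x ∧ f k = y ∧ ∀ i < k, step (f i) (f (i + 1))

/-- A simultaneous rotation from `E₁` to `E₂`: a bijection `π` between the removed and the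
inserted edges such that each `e` shares an endpoint with `π e` and `π e` crosses no edge
of `E₁`. -/
def SimRotation (S : Finset Pt) (E₁ E₂ : Finset (Sym2 Pt)) : Prop :=
  IsPST S E₁ ∧ IsPST S E₂ ∧ ∃ π : Sym2 Pt → Sym2 Pt,
    Set.BijOn π ↑(E₁ \ E₂) ↑(E₂ \ E₁) ∧
    ∀ e ∈ E₁ \ E₂, (∃ p, p ∈ e ∧ p ∈ π e) ∧ ∀ f ∈ E₁, NoCrossPair (π e) f

/-- An empty-triangle rotation replaces an edge `pq` by an adjacent edge `pr` such that
no edge of either tree meets the interior of the triangle `pqr`. -/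
def EmptyTriRot (S : Finset Pt) (E₁ E₂ : Finset (Sym2 Pt)) : Prop :=
  IsPST S E₁ ∧ IsPST S E₂ ∧ ∃ p q r : Pt,
    E₁ \ E₂ = {s(p, q)} ∧ E₂ \ E₁ = {s(p, r)} ∧
    ∀ g ∈ E₁ ∪ E₂, Disjoint (segOf g) (triInt p q r)

/-- A simultaneous empty-triangle rotation. -/
def SimEmptyTriRot (S : Finset Pt) (E₁ E₂ : Finset (Sym2 Pt)) : Prop :=
  IsPST S E₁ ∧ IsPST S E₂ ∧ ∃ π : Sym2 Pt → Sym2 Pt,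
    Set.BijOn π ↑(E₁ \ E₂) ↑(E₂ \ E₁) ∧
    ∀ e ∈ E₁ \ E₂, ∃ p q r : Pt, e = s(p, q) ∧ π e = s(p, r) ∧
      ∀ g ∈ E₁ ∪ E₂, Disjoint (segOf g) (triInt p q r)

/-- An edge slide replaces `pq` by `pr`, where `qr` is an edge of both trees and no edge of
either tree meets the interior of the triangle `pqr`. -/
def EdgeSlide (S : Finset Pt) (E₁ E₂ : Finset (Sym2 Pt)) : Prop :=
  IsPST S E₁ ∧ IsPST S E₂ ∧ ∃ p q r : Pt,
    E₁ \ E₂ = {s(p, q)} ∧ E₂ \ E₁ = {s(p, r)} ∧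
    s(q, r) ∈ E₁ ∧ s(q, r) ∈ E₂ ∧
    ∀ g ∈ E₁ ∪ E₂, Disjoint (segOf g) (triInt p q r)

/-- A simultaneous edge slide. -/
def SimEdgeSlide (S : Finset Pt) (E₁ E₂ : Finset (Sym2 Pt)) : Prop :=
  IsPST S E₁ ∧ IsPST S E₂ ∧ ∃ π : Sym2 Pt → Sym2 Pt,
    Set.BijOn π ↑(E₁ \ E₂) ↑(E₂ \ E₁) ∧
    ∀ e ∈ E₁ \ E₂, ∃ p q r : Pt, e = s(p, q) ∧ π e = s(p, r) ∧
      s(q, r) ∈ E₁ ∧ s(q, r) ∈ E₂ ∧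
      ∀ g ∈ E₁ ∪ E₂, Disjoint (segOf g) (triInt p q r)

/-- `e` is an edge of the convex hull of `S`: it joins two distinct points of `S` and its
segment lies on the boundary of the convex hull of `S`. -/
def IsHullEdge (S : Finset Pt) (e : Sym2 Pt) : Prop :=
  ∃ u v : Pt, e = s(u, v) ∧ u ∈ S ∧ v ∈ S ∧ u ≠ v ∧
    segment ℝ u v ⊆ frontier (convexHull ℝ (S : Set Pt))

/-- The spanning star centered at `v`. -/
def starAt (S : Finset Pt) (v : Pt) : Finset (Sym2 Pt) := (S.erase v).image (fun w => s(v, w))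

/-- An edge-labeled tree: an edge set together with a labeling function. -/
abbrev LTree := Finset (Sym2 Pt) × (Sym2 Pt → ℕ)

/-- `T` is an edge-labeled noncrossing straight-line spanning tree on `S`: its edge set is in
`𝒯(S)` and its labeling is a bijection from the edges onto `{1, …, |S| - 1}`
(normalized to `0` on non-edges). -/
def IsLabeledPST (S : Finset Pt) (T : LTree) : Prop :=
  IsPST S T.1 ∧ Set.BijOn T.2 ↑T.1 (Set.Icc 1 (S.card - 1)) ∧ ∀ e, e ∉ T.1 → T.2 e = 0

/-- A simultaneous exchange on edge-labeled trees: an arbitrary bijection between removed and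
inserted edges transferring labels, all common edges keeping their labels. -/
def LabSimExchange (S : Finset Pt) (T₁ T₂ : LTree) : Prop :=
  IsLabeledPST S T₁ ∧ IsLabeledPST S T₂ ∧ ∃ π : Sym2 Pt → Sym2 Pt,
    Set.BijOn π ↑(T₁.1 \ T₂.1) ↑(T₂.1 \ T₁.1) ∧
    (∀ e ∈ T₁.1 \ T₂.1, T₂.2 (π e) = T₁.2 e) ∧
    ∀ e ∈ T₁.1 ∩ T₂.1, T₂.2 e = T₁.2 e

/-- A rotation on edge-labeled trees: the removed and inserted edges share an endpoint and do
not cross, the label of the removed edge is transferred, and all other labels are kept. -/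
def LabRotation (S : Finset Pt) (T₁ T₂ : LTree) : Prop :=
  IsLabeledPST S T₁ ∧ IsLabeledPST S T₂ ∧ ∃ e₁ e₂ : Sym2 Pt,
    T₁.1 \ T₂.1 = {e₁} ∧ T₂.1 \ T₁.1 = {e₂} ∧
    (∃ p, p ∈ e₁ ∧ p ∈ e₂) ∧ NoCrossPair e₁ e₂ ∧
    T₂.2 e₂ = T₁.2 e₁ ∧ ∀ e ∈ T₁.1 ∩ T₂.1, T₂.2 e = T₁.2 e

/-- An edge slide on edge-labeled trees, transferring the label of the slid edge. -/
def LabEdgeSlide (S : Finset Pt) (T₁ T₂ : LTree) : Prop :=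
  IsLabeledPST S T₁ ∧ IsLabeledPST S T₂ ∧ ∃ p q r : Pt,
    T₁.1 \ T₂.1 = {s(p, q)} ∧ T₂.1 \ T₁.1 = {s(p, r)} ∧
    s(q, r) ∈ T₁.1 ∧ s(q, r) ∈ T₂.1 ∧
    (∀ g ∈ T₁.1 ∪ T₂.1, Disjoint (segOf g) (triInt p q r)) ∧
    T₂.2 (s(p, r)) = T₁.2 (s(p, q)) ∧ ∀ e ∈ T₁.1 ∩ T₂.1, T₂.2 e = T₁.2 e

/-!
An exchange between two labeled trees exists as soon as the common edges carry the same labels: the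
labels then dictate the bijection. Hence any two labeled trees on `S` are three exchanges apart once
`S` carries two edge-disjoint trees `A` and `B`: pass from `T` to `A` keeping the labels of common
edges, relabel arbitrarily on the way from `A` to `B`, and pass from `B` to `T'`.

If `S` has at least four points, let `qr` and `rs` be consecutive hull edges and `p` a fourth point.
The star at `p` with `pq` replaced by `qr` and the star at `q` with `qr` replaced by `rs` are
noncrossing and edge-disjoint. For three points, a misplaced label can be repaired by detouring
through the stars that contain the edge missing from `T`, and for fewer points any two labelings
agree.
-/

section ReachesIn

variable {α : Type*} {step : α → α → Prop}

theorem ReachesIn.refl (m : ℕ) (x : α) : ReachesIn step m x x :=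
  ⟨0, Nat.zero_le m, fun _ => x, rfl, rfl, fun _ hi => absurd hi (Nat.not_lt_zero _)⟩

theorem ReachesIn.head {m : ℕ} {x y z : α} (hxy : step x y) (hyz : ReachesIn step m y z) :
    ReachesIn step (m + 1) x z := by
  obtain ⟨k, hk, f, rfl, rfl, hf⟩ := hyz
  refine ⟨k + 1, Nat.succ_le_succ hk, fun i => Nat.casesOn i x f, rfl, rfl, fun i hi => ?_⟩
  cases i with
  | zero => exact hxy
  | succ i => exact hf i (Nat.lt_of_succ_lt_succ hi)

end ReachesIn

/-! ### Exchanges and labelings -/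

theorem exists_bijOn_diff_of_eqOn_inter {α β : Type*} {f g : α → β} {s t : Set α} {u : Set β}
    (hf : Set.BijOn f s u) (hg : Set.BijOn g t u) (hfg : Set.EqOn f g (s ∩ t)) :
    ∃ π : α → α, Set.BijOn π (s \ t) (t \ s) ∧ ∀ x ∈ s \ t, g (π x) = f x := by
  have partner : ∀ x, ∃ y, x ∈ s → y ∈ t ∧ g y = f x := fun x => by
    by_cases hx : x ∈ s
    · obtain ⟨y, hy, hyx⟩ := hg.surjOn (hf.mapsTo hx)
      exact ⟨y, fun _ => ⟨hy, hyx⟩⟩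
    · exact ⟨x, fun h => absurd h hx⟩
  choose π hπ using partner
  refine ⟨π, ⟨fun x hx => ⟨(hπ x hx.1).1, fun hπs => ?_⟩, fun x hx y hy hxy => ?_,
    fun y hy => ?_⟩, fun x hx => (hπ x hx.1).2⟩
  · have hfix : π x = x :=
      hf.injOn hπs hx.1 ((hfg ⟨hπs, (hπ x hx.1).1⟩).trans (hπ x hx.1).2)
    exact hx.2 (hfix ▸ (hπ x hx.1).1)
  · exact hf.injOn hx.1 hy.1 ((hπ x hx.1).2.symm.trans (hxy ▸ (hπ y hy.1).2))
  · obtain ⟨x, hx, hxy⟩ := hf.surjOn (hg.mapsTo hy.1)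
    have hxt : x ∉ t := fun hxt =>
      hy.2 (hg.injOn hxt hy.1 ((hfg ⟨hx, hxt⟩).symm.trans hxy) ▸ hx)
    exact ⟨x, ⟨hx, hxt⟩, hg.injOn (hπ x hx).1 hy.1 ((hπ x hx).2.trans hxy)⟩

section Labelings

variable {S : Finset Pt} {T U : LTree}

theorem IsLabeledPST.labSimExchange (hT : IsLabeledPST S T) (hU : IsLabeledPST S U)
    (hTU : Set.EqOn T.2 U.2 (T.1 ∩ U.1)) : LabSimExchange S T U := by
  obtain ⟨π, hπ, hlabel⟩ := exists_bijOn_diff_of_eqOn_inter hT.2.1 hU.2.1 hTU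
  refine ⟨hT, hU, π, ?_, fun e he => hlabel e (by simpa using he),
    fun e he => (hTU (by simpa using he)).symm⟩
  simpa only [Finset.coe_sdiff] using hπ

theorem IsLabeledPST.exists_labeling_eqOn (hT : IsLabeledPST S T) {A : Finset (Sym2 Pt)}
    (hA : IsPST S A) : ∃ l, IsLabeledPST S (A, l) ∧ Set.EqOn T.2 l (T.1 ∩ A) := by
  have hcard : Fintype.card A = (Finset.Icc 1 (S.card - 1)).card := by
    have := hA.2.2.1
    simp only [Fintype.card_coe, Nat.card_Icc]
    omega
  obtain ⟨σ, hσ⟩ := Set.MapsTo.exists_equiv_extend_of_card_eq hcard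
    (s := {e : A | e.1 ∈ T.1}) (f := fun e => T.2 e)
    (fun e he => by simpa using hT.2.1.mapsTo he)
    (fun e he e' he' h => Subtype.ext (hT.2.1.injOn he he' h))
  let l : Sym2 Pt → ℕ := fun e => if he : e ∈ A then σ ⟨e, he⟩ else 0
  have l_apply (e : A) : l e = σ e := dif_pos e.2
  refine ⟨l, ⟨hA, ⟨fun e he => ?_, fun e he e' he' h => ?_, fun k hk => ?_⟩,
    fun e he => dif_neg he⟩, fun e he => ?_⟩
  · have hl_mem : l e ∈ Finset.Icc 1 (S.card - 1) := l_apply ⟨e, he⟩ ▸ (σ ⟨e, he⟩).2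
    exact Finset.mem_Icc.1 hl_mem
  · have hσ_eq : (σ ⟨e, he⟩ : ℕ) = σ ⟨e', he'⟩ :=
      (l_apply ⟨e, he⟩).symm.trans (h.trans (l_apply ⟨e', he'⟩))
    exact congrArg Subtype.val (σ.injective (Subtype.ext hσ_eq))
  · obtain ⟨e, he⟩ := σ.surjective ⟨k, Finset.mem_Icc.2 hk⟩
    exact ⟨e, e.2, (l_apply e).trans (congrArg Subtype.val he)⟩
  · rw [l_apply ⟨e, he.2⟩]
    exact (hσ ⟨e, he.2⟩ he.1).symm

theorem reachesIn_three_of_eqOn {V W : LTree} (hT : IsLabeledPST S T) (hV : IsLabeledPST S V)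
    (hW : IsLabeledPST S W) (hU : IsLabeledPST S U) (hTV : Set.EqOn T.2 V.2 (T.1 ∩ V.1))
    (hVW : Set.EqOn V.2 W.2 (V.1 ∩ W.1)) (hWU : Set.EqOn W.2 U.2 (W.1 ∩ U.1)) :
    ReachesIn (LabSimExchange S) 3 T U :=
  .head (hT.labSimExchange hV hTV) <| .head (hV.labSimExchange hW hVW) <|
    .head (hW.labSimExchange hU hWU) <| .refl 0 U

theorem reachesIn_three_of_disjoint {A B : Finset (Sym2 Pt)} (hA : IsPST S A) (hB : IsPST S B)
    (hAB : Disjoint A B) (hT : IsLabeledPST S T) (hU : IsLabeledPST S U) :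
    ReachesIn (LabSimExchange S) 3 T U := by
  obtain ⟨l, hl, hTl⟩ := hT.exists_labeling_eqOn hA
  obtain ⟨m, hm, hUm⟩ := hU.exists_labeling_eqOn hB
  have hlm : Set.EqOn l m (A ∩ B) := by
    simp [← Finset.coe_inter, Finset.disjoint_iff_inter_eq_empty.1 hAB]
  exact reachesIn_three_of_eqOn hT hl hm hU hTl hlm (Set.inter_comm _ _ ▸ hUm.symm)

end Labelings

/-! ### Stars -/

section Stars

variable {S : Finset Pt} {E : Finset (Sym2 Pt)}

theorem NoCrossPair.symm {e f : Sym2 Pt} (h : NoCrossPair e f) : NoCrossPair f e :=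
  fun _ hz => (h hz.symm).symm

theorem NoCross.insert {e : Sym2 Pt} (hE : NoCross E) (he : ∀ f ∈ E, NoCrossPair e f) :
    NoCross (insert e E) := by
  intro f hf g hg hfg
  rw [Finset.mem_insert] at hf hg
  rcases hf with rfl | hf <;> rcases hg with rfl | hg
  · exact absurd rfl hfg
  · exact he g hg
  · exact (he f hf).symm
  · exact hE f hf g hg hfg

theorem reflTransGen_of_root {v : Pt}
    (h : ∀ x ∈ S, Relation.ReflTransGen (fun a b => s(a, b) ∈ E) v x) :
    ∀ p ∈ S, ∀ q ∈ S, Relation.ReflTransGen (fun a b => s(a, b) ∈ E) p q := by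
  have : Std.Symm (fun a b : Pt => s(a, b) ∈ E) := ⟨fun a b h => by rwa [Sym2.eq_swap]⟩
  exact fun p hp q hq => (Relation.ReflTransGen.stdSymm.symm _ _ (h p hp)).trans (h q hq)

theorem mem_starAt {v : Pt} {e : Sym2 Pt} :
    e ∈ starAt S v ↔ ∃ w ∈ S, w ≠ v ∧ e = s(v, w) := by
  simp only [starAt, Finset.mem_image, Finset.mem_erase]
  grind

theorem mk_mem_starAt {v w : Pt} (hw : w ∈ S) (hwv : w ≠ v) : s(v, w) ∈ starAt S v :=
  mem_starAt.2 ⟨w, hw, hwv, rfl⟩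

theorem mem_of_mem_starAt {v : Pt} {e : Sym2 Pt} (he : e ∈ starAt S v) : v ∈ e := by
  obtain ⟨w, -, -, rfl⟩ := mem_starAt.1 he
  exact Sym2.mem_mk_left v w

theorem card_starAt_add_one {v : Pt} (hv : v ∈ S) : (starAt S v).card + 1 = S.card := by
  rw [starAt, Finset.card_image_of_injective _ fun _ _ => Sym2.congr_right.1,
    Finset.card_erase_add_one hv]

theorem ConvexPos.not_sameRay (hS : ConvexPos S) {p x y : Pt} (hp : p ∈ S) (hx : x ∈ S)
    (hy : y ∈ S) (hxp : x ≠ p) (hyp : y ≠ p) (hxy : x ≠ y) : ¬ SameRay ℝ (x - p) (y - p) := by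
  have not_wbtw : ∀ {x y : Pt}, x ∈ S → y ∈ S → x ≠ p → x ≠ y → ¬ Wbtw ℝ p x y :=
    fun {x y} hx hy hxp hxy h => by
      have hp' : p ∈ (S : Set Pt) \ {x} := ⟨hp, hxp.symm⟩
      have hy' : y ∈ (S : Set Pt) \ {x} := ⟨hy, hxy.symm⟩
      exact hS x hx (segment_subset_convexHull hp' hy' (mem_segment_iff_wbtw.2 h))
  intro h
  rcases wbtw_total_of_sameRay_vsub_left (R := ℝ) (x := p) (y := x) (z := y) h with h | h
  · exact not_wbtw hx hy hxp hxy h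
  · exact not_wbtw hy hx hyp hxy.symm h

theorem ConvexPos.noCrossPair_of_adjacent (hS : ConvexPos S) {p x y : Pt} (hp : p ∈ S) (hx : x ∈ S)
    (hy : y ∈ S) (hxp : x ≠ p) (hyp : y ≠ p) (hxy : x ≠ y) : NoCrossPair s(p, x) s(p, y) := by
  rintro z ⟨hzx, hzy⟩
  have hzx : SameRay ℝ (z - p) (x - p) := (mem_segment_iff_wbtw.1 hzx).sameRay_vsub_left
  have hzy : SameRay ℝ (z - p) (y - p) := (mem_segment_iff_wbtw.1 hzy).sameRay_vsub_left
  have hzp : z = p := by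
    by_contra hzp
    refine hS.not_sameRay hp hx hy hxp hyp hxy (hzx.symm.trans hzy fun h => ?_)
    exact absurd (sub_eq_zero.1 h) hzp
  subst hzp
  exact ⟨Sym2.mem_mk_left z x, Sym2.mem_mk_left z y⟩

theorem ConvexPos.isPST_starAt (hS : ConvexPos S) {v : Pt} (hv : v ∈ S) :
    IsPST S (starAt S v) := by
  refine ⟨fun e he => ?_, fun e he f hf hef => ?_, card_starAt_add_one hv,
    reflTransGen_of_root (v := v) fun x hx => ?_⟩
  · obtain ⟨w, hw, hwv, rfl⟩ := mem_starAt.1 he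
    refine ⟨by simpa using hwv.symm, fun p hp => ?_⟩
    rcases Sym2.mem_iff.1 hp with rfl | rfl
    exacts [hv, hw]
  · obtain ⟨w, hw, hwv, rfl⟩ := mem_starAt.1 he
    obtain ⟨x, hx, hxv, rfl⟩ := mem_starAt.1 hf
    exact hS.noCrossPair_of_adjacent hv hw hx hwv hxv (by rintro rfl; exact hef rfl)
  · rcases eq_or_ne x v with rfl | hxv
    exacts [.refl, .single (mk_mem_starAt hx hxv)]

end Stars

/-! ### Hull edges -/

/-- `qr` is an edge of the convex hull of `S`, with no further point of `S` on its line: some linear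
functional attains its minimum over `S` exactly at `q` and `r`. -/
def IsExposedEdge (S : Finset Pt) (q r : Pt) : Prop :=
  ∃ f : Pt →ₗ[ℝ] ℝ, f q = f r ∧ ∀ x ∈ S, x ≠ q → x ≠ r → f r < f x

section HullEdges

variable {S : Finset Pt}

theorem IsExposedEdge.symm {q r : Pt} (h : IsExposedEdge S q r) : IsExposedEdge S r q := by
  obtain ⟨f, hqr, hf⟩ := h
  exact ⟨f, hqr.symm, fun x hx hxr hxq => hqr ▸ hf x hx hxq hxr⟩

theorem IsExposedEdge.noCrossPair {q r p x : Pt} (h : IsExposedEdge S q r) (hp : p ∈ S)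
    (hx : x ∈ S) (hpq : p ≠ q) (hpr : p ≠ r) (hxq : x ≠ q) : NoCrossPair s(q, r) s(p, x) := by
  obtain ⟨f, hqr, hf⟩ := h
  rintro z ⟨⟨a, b, -, -, hab, rfl⟩, ⟨c, d, hc, hd, hcd, hz⟩⟩
  have hfz : c * (f p - f r) + d * (f x - f r) = 0 := by
    have := congrArg f hz
    simp only [map_add, map_smul, smul_eq_mul, hqr] at this
    linear_combination this + f r * (hab - hcd)
  have hfp : 0 < f p - f r := sub_pos.2 (hf p hp hpq hpr)
  have hxr : x = r := by
    by_contra hxr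
    have hfx : 0 < f x - f r := sub_pos.2 (hf x hx hxq hxr)
    rcases hc.eq_or_lt with rfl | hc
    · nlinarith
    · nlinarith [mul_pos hc hfp, mul_nonneg hd hfx.le]
  subst hxr
  obtain rfl : c = 0 := by simpa [hfp.ne'] using hfz
  obtain rfl : d = 1 := by simpa using hcd
  rw [← hz]
  simp [epts]

theorem ConvexPos.exists_functional_pos (hS : ConvexPos S) {r : Pt} (hr : r ∈ S) :
    ∃ f : Pt →ₗ[ℝ] ℝ, ∀ x ∈ S, x ≠ r → 0 < f (x - r) := by
  have hclosed : IsClosed (convexHull ℝ ((S : Set Pt) \ {r})) :=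
    ((S.finite_toSet.subset Set.sdiff_subset).isCompact_convexHull ℝ).isClosed
  obtain ⟨f, u, hfr, hf⟩ :=
    geometric_hahn_banach_point_closed (convex_convexHull ℝ _) hclosed (hS r hr)
  refine ⟨f, fun x hx hxr => ?_⟩
  have hfx := hf x (subset_convexHull ℝ _ ⟨hx, hxr⟩)
  simpa using hfr.trans hfx

theorem exists_complementary_functional {f : Pt →ₗ[ℝ] ℝ} (hf : f ≠ 0) :
    ∃ g : Pt →ₗ[ℝ] ℝ, ∀ v, f v = 0 → g v = 0 → v = 0 := by
  have f_apply (v : Pt) : f v = v.1 * f (1, 0) + v.2 * f (0, 1) := by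
    conv_lhs => rw [show v = v.1 • ((1, 0) : Pt) + v.2 • ((0, 1) : Pt) by ext <;> simp]
    simp only [map_add, map_smul, smul_eq_mul]
  have hpos : f (1, 0) ^ 2 + f (0, 1) ^ 2 ≠ 0 := fun h => hf <| LinearMap.ext fun v => by
    have h₁ : f (1, 0) = 0 := by nlinarith [sq_nonneg (f (1, 0)), sq_nonneg (f (0, 1))]
    have h₂ : f (0, 1) = 0 := by nlinarith [sq_nonneg (f (1, 0)), sq_nonneg (f (0, 1))]
    simp [f_apply v, h₁, h₂]
  refine ⟨f (0, 1) • LinearMap.fst ℝ ℝ ℝ - f (1, 0) • LinearMap.snd ℝ ℝ ℝ, fun v hfv hgv => ?_⟩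
  rw [f_apply] at hfv
  simp only [LinearMap.sub_apply, LinearMap.smul_apply, LinearMap.fst_apply, LinearMap.snd_apply,
    smul_eq_mul] at hgv
  ext
  · exact mul_left_cancel₀ hpos (by
      simp only [Prod.fst_zero]; linear_combination f (1, 0) * hfv + f (0, 1) * hgv)
  · exact mul_left_cancel₀ hpos (by
      simp only [Prod.snd_zero]; linear_combination f (0, 1) * hfv - f (1, 0) * hgv)

-- In the coordinates `(f, g)` around `r`, the next hull vertex is the point of least slope `g / f`.
theorem ConvexPos.exists_min_slope (hS : ConvexPos S) {r : Pt} (hr : r ∈ S)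
    (hne : (S.erase r).Nonempty) {f g : Pt →ₗ[ℝ] ℝ} (hf : ∀ x ∈ S, x ≠ r → 0 < f (x - r))
    (hfg : ∀ v, f v = 0 → g v = 0 → v = 0) :
    ∃ q ∈ S, q ≠ r ∧ ∀ x ∈ S, x ≠ q → x ≠ r → g (q - r) * f (x - r) < g (x - r) * f (q - r) := by
  obtain ⟨q, hq, hmin⟩ := (S.erase r).exists_min_image (fun x => g (x - r) / f (x - r)) hne
  obtain ⟨hqr, hqS⟩ := Finset.mem_erase.1 hq
  refine ⟨q, hqS, hqr, fun x hx hxq hxr => ?_⟩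
  have hfq := hf q hqS hqr
  have hfx := hf x hx hxr
  refine lt_of_le_of_ne
    ((div_le_div_iff₀ hfq hfx).1 (hmin x (Finset.mem_erase.2 ⟨hxr, hx⟩))) fun heq => ?_
  refine hS.not_sameRay hr hx hqS hxr hqr hxq (.inr <| .inr ⟨_, _, hfq, hfx, ?_⟩)
  refine sub_eq_zero.1 (hfg _ ?_ ?_) <;> simp only [map_sub, map_smul, smul_eq_mul] at heq ⊢
  · ring
  · linear_combination -heq

theorem isExposedEdge_of_slope_lt {q r : Pt} {f g : Pt →ₗ[ℝ] ℝ}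
    (h : ∀ x ∈ S, x ≠ q → x ≠ r → g (q - r) * f (x - r) < g (x - r) * f (q - r)) :
    IsExposedEdge S q r := by
  refine ⟨f (q - r) • g - g (q - r) • f, ?_, fun x hx hxq hxr => ?_⟩
  · simp only [LinearMap.sub_apply, LinearMap.smul_apply, map_sub, smul_eq_mul]
    ring
  · have := h x hx hxq hxr
    simp only [LinearMap.sub_apply, LinearMap.smul_apply, map_sub, smul_eq_mul] at this ⊢
    linarith

theorem ConvexPos.exists_two_exposedEdges (hS : ConvexPos S) {r : Pt} (hr : r ∈ S)
    (hcard : 3 ≤ S.card) :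
    ∃ q ∈ S, ∃ s ∈ S, q ≠ r ∧ s ≠ r ∧ q ≠ s ∧ IsExposedEdge S q r ∧ IsExposedEdge S r s := by
  have third (q : Pt) : ∃ x ∈ S, x ∉ ({q, r} : Finset Pt) :=
    Finset.exists_mem_notMem_of_card_lt_card (Finset.card_le_two.trans_lt hcard)
  obtain ⟨y, hy, hyr⟩ := third r
  simp only [Finset.mem_insert, Finset.mem_singleton, or_self] at hyr
  have hne : (S.erase r).Nonempty := ⟨y, Finset.mem_erase.2 ⟨hyr, hy⟩⟩
  obtain ⟨f, hf⟩ := hS.exists_functional_pos hr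
  have hf₀ : f ≠ 0 := by
    rintro rfl
    exact lt_irrefl _ (hf y hy hyr)
  obtain ⟨g, hfg⟩ := exists_complementary_functional hf₀
  obtain ⟨q, hq, hqr, hqmin⟩ := hS.exists_min_slope hr hne hf hfg
  obtain ⟨s, hs, hsr, hsmin⟩ := hS.exists_min_slope (g := -g) hr hne hf
    fun v hfv hgv => hfg v hfv (neg_eq_zero.1 hgv)
  refine ⟨q, hq, s, hs, hqr, hsr, ?_, isExposedEdge_of_slope_lt hqmin,
    (isExposedEdge_of_slope_lt hsmin).symm⟩
  rintro rfl
  obtain ⟨x, hx, hxqr⟩ := third q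
  simp only [Finset.mem_insert, Finset.mem_singleton, not_or] at hxqr
  have hmin := hqmin x hx hxqr.1 hxqr.2
  have hmax := hsmin x hx hxqr.1 hxqr.2
  simp only [LinearMap.neg_apply] at hmax
  linarith

end HullEdges

/-! ### Two edge-disjoint trees -/

/-- The star at `p` with its leaf `q` reattached to the leaf `r`; a noncrossing spanning tree when
`qr` is a hull edge. -/
def reattachedStar (S : Finset Pt) (p q r : Pt) : Finset (Sym2 Pt) :=
  insert s(q, r) ((starAt S p).erase s(p, q))

section FourPoints

variable {S : Finset Pt} {p q r s : Pt}

theorem ConvexPos.isPST_reattachedStar (hS : ConvexPos S) (hp : p ∈ S) (hq : q ∈ S) (hr : r ∈ S)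
    (hpq : p ≠ q) (hpr : p ≠ r) (hqr : q ≠ r) (hedge : IsExposedEdge S q r) :
    IsPST S (reattachedStar S p q r) := by
  obtain ⟨hedges, hnocross, hcard, -⟩ := hS.isPST_starAt hp
  have mk_mem {x : Pt} (hx : x ∈ S) (hxp : x ≠ p) (hxq : x ≠ q) :
      s(p, x) ∈ reattachedStar S p q r :=
    Finset.mem_insert_of_mem <|
      Finset.mem_erase.2 ⟨fun h => hxq (Sym2.congr_right.1 h), mk_mem_starAt hx hxp⟩
  refine ⟨fun e he => ?_, NoCross.insert (fun e he f hf => ?_) fun f hf => ?_, ?_,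
    reflTransGen_of_root (v := p) fun x hx => ?_⟩
  · rcases Finset.mem_insert.1 he with rfl | he
    · simp [hqr, hq, hr]
    · exact hedges e (Finset.mem_of_mem_erase he)
  · exact hnocross e (Finset.mem_of_mem_erase he) f (Finset.mem_of_mem_erase hf)
  · obtain ⟨hfq, hf⟩ := Finset.mem_erase.1 hf
    obtain ⟨x, hx, -, rfl⟩ := mem_starAt.1 hf
    exact hedge.noCrossPair hp hx hpq hpr (by rintro rfl; exact hfq rfl)
  · have hnotMem : s(q, r) ∉ (starAt S p).erase s(p, q) := fun h => by
      have := mem_of_mem_starAt (Finset.mem_of_mem_erase h)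
      simp [hpq, hpr] at this
    rw [reattachedStar, Finset.card_insert_of_notMem hnotMem,
      Finset.card_erase_add_one (mk_mem_starAt hq hpq.symm), hcard]
  · rcases eq_or_ne x p with rfl | hxp
    · exact .refl
    rcases eq_or_ne x q with rfl | hxq
    · refine .tail (.single (mk_mem hr hpr.symm hqr.symm)) ?_
      exact Sym2.eq_swap ▸ Finset.mem_insert_self _ _
    · exact .single (mk_mem hx hxp hxq)

theorem disjoint_reattachedStar (hpq : p ≠ q) (hpr : p ≠ r) (hps : p ≠ s) (hqs : q ≠ s) :
    Disjoint (reattachedStar S p q r) (reattachedStar S q r s) := by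
  rw [Finset.disjoint_left]
  intro e he he'
  simp only [reattachedStar, Finset.mem_insert, Finset.mem_erase, mem_starAt] at he he'
  grind [Sym2.eq_iff]

theorem ConvexPos.exists_disjoint_isPST (hS : ConvexPos S) (hcard : 4 ≤ S.card) :
    ∃ A B, IsPST S A ∧ IsPST S B ∧ Disjoint A B := by
  obtain ⟨r, hr⟩ : S.Nonempty := Finset.card_pos.1 (by omega)
  obtain ⟨q, hq, s, hs, hqr, hsr, hqs, hqr_edge, hrs_edge⟩ :=
    hS.exists_two_exposedEdges hr (by omega)
  obtain ⟨p, hp, hp_ne⟩ : ∃ p ∈ S, p ∉ ({q, r, s} : Finset Pt) :=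
    Finset.exists_mem_notMem_of_card_lt_card (Finset.card_le_three.trans_lt hcard)
  simp only [Finset.mem_insert, Finset.mem_singleton, not_or] at hp_ne
  obtain ⟨hpq, hpr, hps⟩ := hp_ne
  exact ⟨reattachedStar S p q r, reattachedStar S q r s,
    hS.isPST_reattachedStar hp hq hr hpq hpr hqr hqr_edge,
    hS.isPST_reattachedStar hq hr hs hqr hqs hsr.symm hrs_edge,
    disjoint_reattachedStar hpq hpr hps hqs⟩

end FourPoints

/-! ### At most three points -/

section FewPoints

variable {S : Finset Pt} {T U : LTree}

theorem IsLabeledPST.eqOn_of_card_le_two (hcard : S.card ≤ 2) (hT : IsLabeledPST S T)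
    (hU : IsLabeledPST S U) : Set.EqOn T.2 U.2 (T.1 ∩ U.1) := by
  intro e he
  have hTe := Set.mem_Icc.1 (hT.2.1.mapsTo he.1)
  have hUe := Set.mem_Icc.1 (hU.2.1.mapsTo he.2)
  omega

theorem IsLabeledPST.label_eq_one_or_two (hcard : S.card = 3) (hT : IsLabeledPST S T)
    {e : Sym2 Pt} (he : e ∈ T.1) : T.2 e = 1 ∨ T.2 e = 2 := by
  have := Set.mem_Icc.1 (hT.2.1.mapsTo he)
  omega

theorem IsPST.exists_adjacent_of_card_eq_three (hcard : S.card = 3) {E : Finset (Sym2 Pt)}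
    (hE : IsPST S E) {e : Sym2 Pt} (he : e ∈ E) :
    ∃ a ∈ S, ∃ b ∈ S, ∃ c ∈ S, a ≠ b ∧ a ≠ c ∧ b ≠ c ∧ e = s(b, a) ∧ s(c, a) ∈ E := by
  obtain ⟨hedges, -, hE_card, -⟩ := hE
  obtain ⟨f, hf, hfe⟩ := Finset.exists_mem_ne (show 1 < E.card by omega) e
  induction e with | _ a b
  induction f with | _ x y
  have hab := hedges _ he
  have hxy := hedges _ hf
  simp only [Sym2.mk_isDiag_iff, Sym2.mem_iff, forall_eq_or_imp, forall_eq] at hab hxy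
  have hmeet : a = x ∨ a = y ∨ b = x ∨ b = y := by
    by_contra! h
    have hsub : ({a, b, x, y} : Finset Pt) ⊆ S := by grind
    have hfour : ({a, b, x, y} : Finset Pt).card = 4 := by grind
    have := Finset.card_le_card hsub
    omega
  rw [ne_eq, Sym2.eq_iff] at hfe
  rcases hmeet with rfl | rfl | rfl | rfl
  · exact ⟨a, hab.2.1, b, hab.2.2, y, hxy.2.2, by grind [Sym2.eq_swap]⟩
  · exact ⟨a, hab.2.1, b, hab.2.2, x, hxy.2.1, by grind [Sym2.eq_swap]⟩
  · exact ⟨b, hab.2.2, a, hab.2.1, y, hxy.2.2, by grind [Sym2.eq_swap]⟩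
  · exact ⟨b, hab.2.2, a, hab.2.1, x, hxy.2.1, by grind [Sym2.eq_swap]⟩

-- If `T` has edges `ab`, `ac` and `U` gives `ab` the label that `T` gives `ac`, then keeping common
-- labels on the way from `T` to the star at `c`, and from `U` to the star at `b`, forces the same
-- label on the only edge `bc` shared by these stars.
theorem ConvexPos.reachesIn_three_of_label_ne (hS : ConvexPos S) (hcard : S.card = 3)
    (hT : IsLabeledPST S T) (hU : IsLabeledPST S U) {e : Sym2 Pt} (heT : e ∈ T.1) (heU : e ∈ U.1)
    (hne : T.2 e ≠ U.2 e) : ReachesIn (LabSimExchange S) 3 T U := by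
  obtain ⟨a, ha, b, hb, c, hc, hab, hac, hbc, rfl, hca_mem⟩ :=
    hT.1.exists_adjacent_of_card_eq_three hcard heT
  obtain ⟨l, hl, hTl⟩ := hT.exists_labeling_eqOn (hS.isPST_starAt hc)
  obtain ⟨m, hm, hUm⟩ := hU.exists_labeling_eqOn (hS.isPST_starAt hb)
  have hba_b : s(b, a) ∈ starAt S b := mk_mem_starAt ha hab
  have hca_c : s(c, a) ∈ starAt S c := mk_mem_starAt ha hac
  have hcb_c : s(c, b) ∈ starAt S c := mk_mem_starAt hb hbc
  have hcb_b : s(c, b) ∈ starAt S b := Sym2.eq_swap ▸ mk_mem_starAt hc hbc.symm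
  have hlm_cb : l s(c, b) = m s(c, b) := by
    have hTl_ca : T.2 s(c, a) = l s(c, a) := hTl ⟨hca_mem, hca_c⟩
    have hUm_ba : U.2 s(b, a) = m s(b, a) := hUm ⟨heU, hba_b⟩
    have hT_ne : T.2 s(c, a) ≠ T.2 s(b, a) :=
      hT.2.1.injOn.ne hca_mem heT (by simp [hbc.symm, hac.symm])
    have hl_ne : l s(c, b) ≠ l s(c, a) := hl.2.1.injOn.ne hcb_c hca_c (by simp [hab.symm, hac.symm])
    have hm_ne : m s(c, b) ≠ m s(b, a) := hm.2.1.injOn.ne hcb_b hba_b (by simp [hbc.symm, hac.symm])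
    have hT_ba := hT.label_eq_one_or_two hcard heT
    have hT_ca := hT.label_eq_one_or_two hcard hca_mem
    have hU_ba := hU.label_eq_one_or_two hcard heU
    have hl_cb : l s(c, b) = 1 ∨ l s(c, b) = 2 := hl.label_eq_one_or_two hcard hcb_c
    have hm_cb : m s(c, b) = 1 ∨ m s(c, b) = 2 := hm.label_eq_one_or_two hcard hcb_b
    omega
  have hlm : Set.EqOn l m (starAt S c ∩ starAt S b) := fun e ⟨hec, heb⟩ => by
    obtain rfl := (Sym2.mem_and_mem_iff hbc.symm).1 ⟨mem_of_mem_starAt hec, mem_of_mem_starAt heb⟩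
    exact hlm_cb
  exact reachesIn_three_of_eqOn hT hl hm hU hTl hlm (Set.inter_comm _ _ ▸ hUm.symm)

theorem ConvexPos.reachesIn_three_of_card_eq_three (hS : ConvexPos S) (hcard : S.card = 3)
    (hT : IsLabeledPST S T) (hU : IsLabeledPST S U) : ReachesIn (LabSimExchange S) 3 T U := by
  by_cases hTU : Set.EqOn T.2 U.2 (T.1 ∩ U.1)
  · exact .head (hT.labSimExchange hU hTU) (.refl 2 U)
  · simp only [Set.EqOn, not_forall] at hTU
    obtain ⟨e, he, hne⟩ := hTU
    exact hS.reachesIn_three_of_label_ne hcard hT hU he.1 he.2 hne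

end FewPoints

/-- on a point set in convex position, any two edge-labeled trees are connected
by at most `3` simultaneous exchanges. -/
theorem stmt_17 :
    ∀ S : Finset Pt, ConvexPos S →
      ∀ T T' : LTree, IsLabeledPST S T → IsLabeledPST S T' →
        ReachesIn (LabSimExchange S) 3 T T' := by
  intro S hS T T' hT hT'
  obtain hle | heq | hge : S.card ≤ 2 ∨ S.card = 3 ∨ 4 ≤ S.card := by omega
  · exact .head (hT.labSimExchange hT' (hT.eqOn_of_card_le_two hle hT')) (.refl 2 T')
  · exact hS.reachesIn_three_of_card_eq_three heq hT hT'
  · obtain ⟨A, B, hA, hB, hAB⟩ := hS.exists_disjoint_isPST hge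
    exact reachesIn_three_of_disjoint hA hB hAB hT hT'
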